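/- arXiv:math/0405350 — 6 statements merged into one kernel-verified Lean document; each statement's English description precedes it below -/
import Mathlib

section
/- Let k be an algebraically closed field of characteristic zero, let f ∈ k⟨x,y⟩, and let p₁, p₂ ∈ k² be points with f₀(p₁) = f₀(p₂) = 0. Then there exists t ∈ k such that, setting à = k⟨x,y⟩/(f + t(xy − yx)) (the quotient by the two-sided ideal generated by f + t(xy−yx)), one has Ext¹_Ã(k(p₁), k(p₂)) ≠ 0. -/
open CategoryTheory Opposite

noncomputable section

/-- The abelianization map `k⟨x,y⟩ → k[x,y]`. -/
def abel (k : Type) [Field k] : FreeAlgebra k (Fin 2) →ₐ[k] MvPolynomial (Fin 2) k :=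
  FreeAlgebra.lift k MvPolynomial.X

/-- Evaluation of a noncommutative polynomial at a point of `k²`. -/
def evalAt (k : Type) [Field k] (p : Fin 2 → k) : FreeAlgebra k (Fin 2) →ₐ[k] k :=
  FreeAlgebra.lift k p

lemma eval_abel (k : Type) [Field k] (p : Fin 2 → k) (g : FreeAlgebra k (Fin 2)) :
    MvPolynomial.eval p (abel k g) = evalAt k p g := by
  have h : (MvPolynomial.aeval p).comp (abel k) = evalAt k p := by
    apply FreeAlgebra.hom_ext
    funext i
    simp [abel, evalAt]
  have h2 : (MvPolynomial.aeval p) (abel k g) = evalAt k p g := by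
    rw [← h]; rfl
  have h3 : (MvPolynomial.aeval p) (abel k g) = MvPolynomial.eval p (abel k g) := by
    rw [← MvPolynomial.coe_aeval_eq_eval]; rfl
  rw [← h3, h2]

/-- The quotient algebra `k⟨x,y⟩/(f)` of the free algebra by the two-sided ideal
generated by `f`. -/
abbrev quotAlg (k : Type) [Field k] (f : FreeAlgebra k (Fin 2)) : Type :=
  RingQuot (fun a b : FreeAlgebra k (Fin 2) => a = f ∧ b = 0)

/-- The one-dimensional representation of `k⟨x,y⟩/(f)` given by a point `p` of the plane
curve `f₀ = 0`. -/
def pointHom (k : Type) [Field k] (f : FreeAlgebra k (Fin 2)) (p : Fin 2 → k)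
    (h : MvPolynomial.eval p (abel k f) = 0) : quotAlg k f →ₐ[k] k :=
  RingQuot.liftAlgHom k ⟨evalAt k p, by
    rintro a b ⟨rfl, rfl⟩
    rw [← eval_abel k p a, h, map_zero]⟩

/-- The one-dimensional module `k(p)` over `k⟨x,y⟩/(f)`. -/
def pointMod (k : Type) [Field k] (f : FreeAlgebra k (Fin 2)) (p : Fin 2 → k)
    (h : MvPolynomial.eval p (abel k f) = 0) : ModuleCat (quotAlg k f) :=
  letI : Module (quotAlg k f) k := Module.compHom k (pointHom k f p h).toRingHom
  ModuleCat.of (quotAlg k f) k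

/-- `Ext¹` of modules over the `k`-algebra `A` (as a `k`-vector space). -/
def Ext1 (k : Type) [Field k] (A : Type) [Ring A] [Algebra k A] (M N : ModuleCat A) :
    ModuleCat k :=
  ((Ext k (ModuleCat A) 1).obj (op M)).obj N

/-!
Over any quotient `A` of `k⟨x,y⟩`, an extension of `k(p₁)` by `k(p₂)` is a representation by upper
triangular matrices with diagonal `(p₂, p₁)`; its corner is determined by the vector `u ∈ k²` of
corners of `x` and `y`. Over the free algebra every `u` occurs, the corner of `f` is a linear
functional of `u`, and the corner of `xy - yx` is `det(p₂ - p₁, u)`. The extension splits exactly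
when `u` is proportional to `p₂ - p₁`. If `p₁ ≠ p₂`, choose `u` with `det(p₂ - p₁, u) ≠ 0` and solve
for the `t` that makes the corner of `f + t(xy - yx)` vanish. If `p₁ = p₂`, the corner of `xy - yx`
is always zero, and any nonzero `u` in the kernel of the corner of `f` works.
-/

section SplittingOfExt

variable {R C : Type*} [Ring R] [Category* C] [Abelian C] [Linear R C] [EnoughProjectives C]

theorem exists_d_comp_eq_of_isZero_ext_one {X Y : C} (P : ProjectiveResolution X)
    (hExt : Limits.IsZero (((Ext R C 1).obj (op X)).obj Y))
    (φ : P.complex.X 1 ⟶ Y) (hφ : P.complex.d 2 1 ≫ φ = 0) :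
    ∃ ψ : P.complex.X 0 ⟶ Y, P.complex.d 1 0 ≫ ψ = φ := by
  have hexact := hExt.of_iso (P.isoExt (R := R) 1 Y).symm
  rw [← HomologicalComplex.exactAt_iff_isZero_homology,
    HomologicalComplex.exactAt_iff' _ 0 1 2 (by simp) (by simp),
    ShortComplex.moduleCat_exact_iff] at hexact
  exact hexact φ hφ

theorem nonempty_splitting_of_isZero_ext_one {S : ShortComplex C} (hS : S.ShortExact)
    (hExt : Limits.IsZero (((Ext R C 1).obj (op S.X₃)).obj S.X₁)) :
    Nonempty S.Splitting := by
  have := hS.mono_f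
  have := hS.epi_g
  let P := ProjectiveResolution.of S.X₃
  let π : P.complex.X 0 ⟶ S.X₃ := P.π.f 0
  have d_π : P.complex.d 1 0 ≫ π = 0 := P.complex_d_comp_π_f_zero
  have : Epi π := inferInstanceAs (Epi (P.π.f 0))
  let lift : P.complex.X 0 ⟶ S.X₂ := Projective.factorThru π S.g
  have lift_g : lift ≫ S.g = π := Projective.factorThru_comp _ _
  have d_lift_g : (P.complex.d 1 0 ≫ lift) ≫ S.g = 0 := by
    rw [Category.assoc, lift_g, d_π]
  -- The class of this cocycle is the obstruction to descending `lift` along `π` to a section.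
  let cocycle : P.complex.X 1 ⟶ S.X₁ := hS.exact.lift _ d_lift_g
  have cocycle_f : cocycle ≫ S.f = P.complex.d 1 0 ≫ lift := hS.exact.lift_f _ d_lift_g
  have d_cocycle : P.complex.d 2 1 ≫ cocycle = 0 := by
    rw [← cancel_mono S.f, Category.assoc, cocycle_f]
    simp
  obtain ⟨ψ, d_ψ⟩ := exists_d_comp_eq_of_isZero_ext_one P hExt cocycle d_cocycle
  have d_corrected : P.complex.d 1 0 ≫ (lift - ψ ≫ S.f) = 0 := by
    rw [Preadditive.comp_sub, ← Category.assoc, d_ψ, cocycle_f, sub_self]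
  have : Epi (ShortComplex.mk _ _ P.complex_d_comp_π_f_zero).g := ‹Epi π›
  let s : S.X₃ ⟶ S.X₂ := P.exact₀.desc (lift - ψ ≫ S.f) d_corrected
  have π_s : π ≫ s = lift - ψ ≫ S.f := P.exact₀.g_desc _ d_corrected
  have s_g : s ≫ S.g = 𝟙 S.X₃ := by
    apply (cancel_epi π).1
    calc π ≫ s ≫ S.g = (lift - ψ ≫ S.f) ≫ S.g := by rw [← Category.assoc, π_s]
      _ = π := by simp [lift_g]
      _ = π ≫ 𝟙 S.X₃ := (Category.comp_id _).symm
  exact ⟨.ofExactOfSection S hS.exact s s_g hS.mono_f⟩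

end SplittingOfExt

section TriangularRepresentation

universe v

variable {k A : Type v} [CommRing k] [Ring A] [Algebra k A]

/-- The rank one `A`-module `k_χ` on which `A` acts through the character `χ`. -/
def rankOneModule (χ : A →ₐ[k] k) : ModuleCat.{v} A :=
  (ModuleCat.restrictScalars χ.toRingHom).obj (ModuleCat.of k k)

/-- The space of column vectors `k²`, on which `A` acts through the matrix representation `ρ`. -/
def columnModule (ρ : A →ₐ[k] Matrix (Fin 2) (Fin 2) k) : ModuleCat.{v} A :=
  (ModuleCat.restrictScalars ρ.toRingHom).obj (ModuleCat.of (Matrix (Fin 2) (Fin 2) k) (Fin 2 → k))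

/-- The representation `ρ` is upper triangular with diagonal characters `χ₂, χ₁`. The order is
chosen so that `columnModule ρ` is an extension of `k_χ₁` by `k_χ₂`. -/
def IsUpperTriangular (ρ : A →ₐ[k] Matrix (Fin 2) (Fin 2) k) (χ₁ χ₂ : A →ₐ[k] k) : Prop :=
  ∀ a, ρ a = !![χ₂ a, ρ a 0 1; 0, χ₁ a]

variable {ρ : A →ₐ[k] Matrix (Fin 2) (Fin 2) k} {χ₁ χ₂ : A →ₐ[k] k}

theorem IsUpperTriangular.mulVec_eq (hρ : IsUpperTriangular ρ χ₁ χ₂) (a : A) (v : Fin 2 → k) :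
    (ρ a).mulVec v = ![χ₂ a * v 0 + ρ a 0 1 * v 1, χ₁ a * v 1] := by
  rw [hρ a]
  ext i
  fin_cases i <;> simp [Matrix.mulVec, dotProduct]

/-- The extension `0 → k_χ₂ → k² → k_χ₁ → 0` afforded by an upper triangular representation. -/
def IsUpperTriangular.extension (hρ : IsUpperTriangular ρ χ₁ χ₂) :
    ShortComplex (ModuleCat.{v} A) where
  X₁ := rankOneModule χ₂
  X₂ := columnModule ρ
  X₃ := rankOneModule χ₁
  f := ModuleCat.ofHom (X := rankOneModule χ₂) (Y := columnModule ρ)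
    { toFun (c : k) := (![c, 0] : Fin 2 → k)
      map_add' (c d : k) := show ![c + d, 0] = ![c, 0] + ![d, 0] by simp
      map_smul' a (c : k) := show ![χ₂ a * c, 0] = (ρ a).mulVec ![c, 0] by
        simp [hρ.mulVec_eq] }
  g := ModuleCat.ofHom (X := columnModule ρ) (Y := rankOneModule χ₁)
    { toFun (v : Fin 2 → k) := v 1
      map_add' _ _ := rfl
      map_smul' a (v : Fin 2 → k) := show (ρ a).mulVec v 1 = χ₁ a * v 1 by
        simp [hρ.mulVec_eq] }
  zero := rfl

theorem IsUpperTriangular.extension_shortExact (hρ : IsUpperTriangular ρ χ₁ χ₂) :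
    hρ.extension.ShortExact := by
  refine ModuleCat.shortComplex_shortExact _ (fun v => ⟨fun hv => ⟨v 0, ?_⟩, ?_⟩)
    (fun c d hcd => congrFun hcd 0) (fun c => ⟨![0, c], rfl⟩)
  · refine funext fun i => ?_
    fin_cases i
    exacts [rfl, hv.symm]
  · rintro ⟨c, rfl⟩
    rfl

theorem IsUpperTriangular.exists_corner_eq_of_splitting (hρ : IsUpperTriangular ρ χ₁ χ₂)
    (σ : hρ.extension.Splitting) :
    ∃ c : k, ∀ a, ρ a 0 1 = c * (χ₂ a - χ₁ a) := by
  let s : k → Fin 2 → k := σ.s.hom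
  have s_one : s 1 1 = 1 := congrArg (fun φ => φ.hom (1 : k)) σ.s_g
  have s_mul (a : A) (c : k) : s (χ₁ a * c) = (ρ a).mulVec (s c) := σ.s.hom.map_smul a c
  -- `s` is only known to be `A`-linear, so `χ₁ a` is moved across it as a scalar of `A`.
  have eigenvector (a : A) : (ρ a).mulVec (s 1) = χ₁ a • s 1 :=
    calc (ρ a).mulVec (s 1) = s (χ₁ a * 1) := (s_mul a 1).symm
      _ = s (χ₁ (algebraMap k A (χ₁ a)) * 1) := by rw [χ₁.commutes, Algebra.algebraMap_self_apply]
      _ = (ρ (algebraMap k A (χ₁ a))).mulVec (s 1) := s_mul _ _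
      _ = χ₁ a • s 1 := by
        rw [ρ.commutes, Algebra.algebraMap_eq_smul_one, Matrix.smul_mulVec, Matrix.one_mulVec]
  refine ⟨-s 1 0, fun a => ?_⟩
  have top := congrFun (eigenvector a) 0
  simp only [hρ.mulVec_eq, s_one, Matrix.cons_val_zero, Pi.smul_apply, smul_eq_mul] at top
  linear_combination top

theorem IsUpperTriangular.nontrivial_ext_one {R : Type*} [Ring R] [Linear R (ModuleCat.{v} A)]
    (hρ : IsUpperTriangular ρ χ₁ χ₂)
    (hcorner : ¬ ∃ c : k, ∀ a, ρ a 0 1 = c * (χ₂ a - χ₁ a)) :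
    Nontrivial (((Ext R (ModuleCat.{v} A) 1).obj (op (rankOneModule χ₁))).obj
      (rankOneModule χ₂)) := by
  by_contra htrivial
  have : Subsingleton (((Ext R (ModuleCat.{v} A) 1).obj (op hρ.extension.X₃)).obj
      hρ.extension.X₁) := not_nontrivial_iff_subsingleton.1 htrivial
  obtain ⟨σ⟩ := nonempty_splitting_of_isZero_ext_one (R := R)
    hρ.extension_shortExact (ModuleCat.isZero_of_subsingleton _)
  exact hcorner (hρ.exists_corner_eq_of_splitting σ)

end TriangularRepresentation

section FreeAlgebra

variable {k X : Type*} [CommRing k] (p₁ p₂ : X → k)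

/-- The representation of `k⟨X⟩` by upper triangular matrices with diagonal `(p₂, p₁)` and with
corners `u` on the generators. -/
def triangularLift (u : X → k) : FreeAlgebra k X →ₐ[k] Matrix (Fin 2) (Fin 2) k :=
  FreeAlgebra.lift k fun i => !![p₂ i, u i; 0, p₁ i]

theorem triangularLift_eq (u : X → k) (a : FreeAlgebra k X) :
    triangularLift p₁ p₂ u a =
      !![FreeAlgebra.lift k p₂ a, triangularLift p₁ p₂ u a 0 1; 0, FreeAlgebra.lift k p₁ a] := by
  induction a using FreeAlgebra.induction with
  | grade0 r => ext i j; fin_cases i <;> fin_cases j <;> simp [Matrix.algebraMap_matrix_apply]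
  | grade1 x => simp [triangularLift]
  | mul a b ha hb =>
    rw [map_mul, ha, hb, Matrix.mul_fin_two]
    simp
  | add a b ha hb =>
    rw [map_add, ha, hb]
    simp

theorem triangularLift_mul_corner (u : X → k) (a b : FreeAlgebra k X) :
    triangularLift p₁ p₂ u (a * b) 0 1 =
      FreeAlgebra.lift k p₂ a * triangularLift p₁ p₂ u b 0 1 +
        triangularLift p₁ p₂ u a 0 1 * FreeAlgebra.lift k p₁ b := by
  rw [map_mul, triangularLift_eq p₁ p₂ u a, triangularLift_eq p₁ p₂ u b, Matrix.mul_fin_two]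
  simp

/-- The differential of a noncommutative polynomial `a` at the pair `(p₁, p₂)`: the linear
functional sending `u` to `D_u a`, where `D_u` is the derivation twisted by evaluation at `p₂` on
the left and at `p₁` on the right, with `D_u x = u x` on generators. It is encoded as a corner of
`triangularLift`, so that the twisted Leibniz rule is matrix multiplication. -/
def twistedDifferential (a : FreeAlgebra k X) : (X → k) →ₗ[k] k where
  toFun u := triangularLift p₁ p₂ u a 0 1
  map_add' u v := by
    induction a using FreeAlgebra.induction with
    | grade0 r => simp [Matrix.algebraMap_matrix_apply]
    | grade1 x => simp [triangularLift]
    | mul a b ha hb => simp only [triangularLift_mul_corner, ha, hb]; ring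
    | add a b ha hb => simp only [map_add, Matrix.add_apply, ha, hb]; ring
  map_smul' c u := by
    induction a using FreeAlgebra.induction with
    | grade0 r => simp [Matrix.algebraMap_matrix_apply]
    | grade1 x => simp [triangularLift]
    | mul a b ha hb =>
      simp only [triangularLift_mul_corner, ha, hb, RingHom.id_apply, smul_eq_mul]; ring
    | add a b ha hb => simp only [map_add, Matrix.add_apply, ha, hb, smul_add]

theorem twistedDifferential_ι (i : X) (u : X → k) :
    twistedDifferential p₁ p₂ (FreeAlgebra.ι k i) u = u i := by
  simp [twistedDifferential, triangularLift]

theorem twistedDifferential_mul (a b : FreeAlgebra k X) (u : X → k) :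
    twistedDifferential p₁ p₂ (a * b) u =
      FreeAlgebra.lift k p₂ a * twistedDifferential p₁ p₂ b u +
        twistedDifferential p₁ p₂ a u * FreeAlgebra.lift k p₁ b :=
  triangularLift_mul_corner p₁ p₂ u a b

theorem twistedDifferential_add_smul_commutator (a : FreeAlgebra k X) (t : k) (i j : X)
    (u : X → k) :
    twistedDifferential p₁ p₂ (a + t • (FreeAlgebra.ι k i * FreeAlgebra.ι k j
        - FreeAlgebra.ι k j * FreeAlgebra.ι k i)) u =
      twistedDifferential p₁ p₂ a u + t * ((p₂ - p₁) i * u j - (p₂ - p₁) j * u i) := by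
  have commutator : twistedDifferential p₁ p₂ (FreeAlgebra.ι k i * FreeAlgebra.ι k j) u -
      twistedDifferential p₁ p₂ (FreeAlgebra.ι k j * FreeAlgebra.ι k i) u =
        (p₂ - p₁) i * u j - (p₂ - p₁) j * u i := by
    simp only [twistedDifferential_mul, twistedDifferential_ι, FreeAlgebra.lift_ι_apply,
      Pi.sub_apply]
    ring
  rw [← commutator]
  simp [twistedDifferential]

theorem triangularLift_eq_zero {a : FreeAlgebra k X} {u : X → k}
    (h₁ : FreeAlgebra.lift k p₁ a = 0) (h₂ : FreeAlgebra.lift k p₂ a = 0)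
    (hu : twistedDifferential p₁ p₂ a u = 0) : triangularLift p₁ p₂ u a = 0 := by
  have corner : triangularLift p₁ p₂ u a 0 1 = 0 := hu
  rw [triangularLift_eq, h₁, h₂, corner]
  ext i j
  fin_cases i <;> fin_cases j <;> rfl

end FreeAlgebra

theorem nontrivial_ext1_pointMod {k : Type} [Field k] {g : FreeAlgebra k (Fin 2)}
    {p₁ p₂ u : Fin 2 → k} (h₁ : MvPolynomial.eval p₁ (abel k g) = 0)
    (h₂ : MvPolynomial.eval p₂ (abel k g) = 0) (hu : twistedDifferential p₁ p₂ g u = 0)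
    (hspan : u ∉ Submodule.span k {p₂ - p₁}) :
    Nontrivial (Ext1 k (quotAlg k g) (pointMod k g p₁ h₁) (pointMod k g p₂ h₂)) := by
  let π : FreeAlgebra k (Fin 2) →ₐ[k] quotAlg k g := RingQuot.mkAlgHom k _
  have π_surjective : Function.Surjective π := RingQuot.mkAlgHom_surjective k _
  have lift_g : triangularLift p₁ p₂ u g = 0 :=
    triangularLift_eq_zero p₁ p₂ ((eval_abel k p₁ g).symm.trans h₁)
      ((eval_abel k p₂ g).symm.trans h₂) hu
  let ρ : quotAlg k g →ₐ[k] Matrix (Fin 2) (Fin 2) k :=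
    RingQuot.liftAlgHom k ⟨triangularLift p₁ p₂ u, by
      rintro a b ⟨rfl, rfl⟩
      rw [lift_g, map_zero]⟩
  have ρ_π (a) : ρ (π a) = triangularLift p₁ p₂ u a := RingQuot.liftAlgHom_mkAlgHom_apply ..
  have pointHom_π (p h a) : pointHom k g p h (π a) = evalAt k p a :=
    RingQuot.liftAlgHom_mkAlgHom_apply ..
  have hρ : IsUpperTriangular ρ (pointHom k g p₁ h₁) (pointHom k g p₂ h₂) := fun a => by
    obtain ⟨a, rfl⟩ := π_surjective a
    rw [ρ_π, pointHom_π, pointHom_π]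
    exact triangularLift_eq p₁ p₂ u a
  refine hρ.nontrivial_ext_one fun ⟨c, hc⟩ => hspan (Submodule.mem_span_singleton.2 ⟨c, ?_⟩)
  ext i
  have corner := hc (π (FreeAlgebra.ι k i))
  rw [ρ_π, pointHom_π, pointHom_π] at corner
  simpa [triangularLift, evalAt] using corner.symm

theorem exists_ne_zero_apply_eq_zero {k V : Type*} [Field k] [AddCommGroup V] [Module k V]
    [FiniteDimensional k V] (hV : 1 < Module.finrank k V) (L : V →ₗ[k] k) :
    ∃ u ≠ 0, L u = 0 := by
  have hker : LinearMap.ker L ≠ ⊥ := LinearMap.ker_ne_bot_of_finrank_lt (by simpa using hV)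
  obtain ⟨u, hu, hu0⟩ := Submodule.exists_mem_ne_zero_of_ne_bot hker
  exact ⟨u, hu0, hu⟩

theorem exists_cross_ne_zero {k : Type*} [CommRing k] {d : Fin 2 → k} (hd : d ≠ 0) :
    ∃ u : Fin 2 → k, d 0 * u 1 - d 1 * u 0 ≠ 0 := by
  contrapose! hd
  ext i
  fin_cases i
  · simpa using hd ![0, 1]
  · simpa using hd ![1, 0]

theorem exists_add_mul_cross_eq_zero_notMem_span {k : Type*} [Field k]
    (L : (Fin 2 → k) →ₗ[k] k) (d : Fin 2 → k) :
    ∃ (t : k) (u : Fin 2 → k),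
      L u + t * (d 0 * u 1 - d 1 * u 0) = 0 ∧ u ∉ Submodule.span k {d} := by
  rcases eq_or_ne d 0 with rfl | hd
  · obtain ⟨u, hu, hLu⟩ := exists_ne_zero_apply_eq_zero (by simp) L
    exact ⟨0, u, by simpa using hLu, by simpa using hu⟩
  · obtain ⟨u, hu⟩ := exists_cross_ne_zero hd
    refine ⟨-L u / (d 0 * u 1 - d 1 * u 0), u, by field_simp; ring, fun hmem => hu ?_⟩
    obtain ⟨c, rfl⟩ := Submodule.mem_span_singleton.1 hmem
    simp only [Pi.smul_apply, smul_eq_mul]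
    ring

theorem exists_model_with_nonvanishing_ext_general
    (k : Type) [Field k]
    (f : FreeAlgebra k (Fin 2)) (p₁ p₂ : Fin 2 → k)
    (h1 : MvPolynomial.eval p₁ (abel k f) = 0)
    (h2 : MvPolynomial.eval p₂ (abel k f) = 0) :
    ∃ t : k, Nontrivial (Ext1 k
      (quotAlg k (f + t • (FreeAlgebra.ι k 0 * FreeAlgebra.ι k 1
          - FreeAlgebra.ι k 1 * FreeAlgebra.ι k 0)))
      (pointMod k (f + t • (FreeAlgebra.ι k 0 * FreeAlgebra.ι k 1
          - FreeAlgebra.ι k 1 * FreeAlgebra.ι k 0)) p₁ (by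
        rw [map_add (abel k), map_add, h1, zero_add]
        simp [abel, mul_comm]))
      (pointMod k (f + t • (FreeAlgebra.ι k 0 * FreeAlgebra.ι k 1
          - FreeAlgebra.ι k 1 * FreeAlgebra.ι k 0)) p₂ (by
        rw [map_add (abel k), map_add, h2, zero_add]
        simp [abel, mul_comm]))) := by
  obtain ⟨t, u, hu, hspan⟩ :=
    exists_add_mul_cross_eq_zero_notMem_span (twistedDifferential p₁ p₂ f) (p₂ - p₁)
  rw [← twistedDifferential_add_smul_commutator] at hu
  exact ⟨t, nontrivial_ext1_pointMod _ _ hu hspan⟩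

/-- given two points `p₁, p₂` of the plane curve `f₀ = 0`, there is a
noncommutative model `Ã = k⟨x,y⟩/(f + t[x,y])` of the curve with
`Ext¹_Ã(k(p₁), k(p₂)) ≠ 0`. -/
theorem exists_model_with_nonvanishing_ext
    (k : Type) [Field k] [IsAlgClosed k] [CharZero k]
    (f : FreeAlgebra k (Fin 2)) (p₁ p₂ : Fin 2 → k)
    (h1 : MvPolynomial.eval p₁ (abel k f) = 0)
    (h2 : MvPolynomial.eval p₂ (abel k f) = 0) :
    ∃ t : k, Nontrivial (Ext1 k
      (quotAlg k (f + t • (FreeAlgebra.ι k 0 * FreeAlgebra.ι k 1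
          - FreeAlgebra.ι k 1 * FreeAlgebra.ι k 0)))
      (pointMod k (f + t • (FreeAlgebra.ι k 0 * FreeAlgebra.ι k 1
          - FreeAlgebra.ι k 1 * FreeAlgebra.ι k 0)) p₁ (by
        rw [map_add (abel k), map_add, h1, zero_add]
        simp [abel, mul_comm]))
      (pointMod k (f + t • (FreeAlgebra.ι k 0 * FreeAlgebra.ι k 1
          - FreeAlgebra.ι k 1 * FreeAlgebra.ι k 0)) p₂ (by
        rw [map_add (abel k), map_add, h2, zero_add]
        simp [abel, mul_comm]))) :=
  exists_model_with_nonvanishing_ext_general k f p₁ p₂ h1 h2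

end
end

section
/- Let k be a field of characteristic zero and δ ∈ k with δ ≠ 0. Then there do not exist matrices X, Y ∈ M₂(k) such that X² + Y² − I + δ(XY − YX) = 0 and X, Y generate M₂(k) as a k-algebra. Equivalently, the noncommutative quadric A_δ = k⟨x,y⟩/(x² + y² − 1 + δ[x,y]) has no 2-dimensional simple module when δ ≠ 0. -/
/-!
By Cayley–Hamilton, every submodule of `M₂(k)` containing `1` is closed under squaring, hence, by
polarization, under `(X, Y) ↦ XY + YX`. The relation with `δ` invertible places `XY - YX` in
`V = span {1, X, Y}`, so, as `2` is invertible, `XY` and `YX` also lie in `V`. Then `V` is the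
algebra generated by `X` and `Y`, and it cannot be `M₂(k)`, which has rank `4 > 3`.
-/

open Submodule

lemma span_triple_ne_top_of_three_lt_finrank {R M : Type*} [Semiring R] [StrongRankCondition R]
    [AddCommMonoid M] [Module R M] (h : 3 < Module.finrank R M) (x y z : M) :
    span R {x, y, z} ≠ ⊤ := by
  intro h_top
  refine h.not_ge (finrank_le_of_span_eq_top (v := ![x, y, z]) ?_)
  simpa only [Matrix.range_cons, Matrix.range_empty, Set.union_empty, Set.singleton_union]
    using h_top

lemma toSubmodule_adjoin_le_span_insert_one {R A : Type*} [CommSemiring R] [Semiring A]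
    [Algebra R A] {s : Set A}
    (hs : ∀ x ∈ s, ∀ y ∈ s, x * y ∈ span R (insert 1 s)) :
    Subalgebra.toSubmodule (Algebra.adjoin R s) ≤ span R (insert 1 s) := by
  have one_mem : (1 : A) ∈ span R (insert 1 s) := subset_span (Set.mem_insert 1 s)
  have gen_mem : ∀ x ∈ s, x ∈ span R (insert 1 s) := fun x hx ↦
    subset_span (Set.mem_insert_of_mem 1 hx)
  have mul_le : span R (insert 1 s) * span R (insert 1 s) ≤ span R (insert 1 s) := by
    rw [span_mul_span, span_le]
    rintro _ ⟨x, rfl | hx, y, rfl | hy, rfl⟩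
    · simpa using one_mem
    · simpa using gen_mem y hy
    · simpa using gen_mem x hx
    · exact hs x hx y hy
  exact Algebra.adjoin_le (S := (span R (insert 1 s)).toSubalgebra one_mem
    fun _ _ hx hy ↦ mul_le (mul_mem_mul hx hy)) gen_mem

lemma mul_add_mul_swap_mem_of_sq_mem {A S : Type*} [Ring A] [SetLike S A] [AddSubgroupClass S A]
    {V : S} {x y : A} (hsq : ∀ z ∈ V, z ^ 2 ∈ V) (hx : x ∈ V) (hy : y ∈ V) :
    x * y + y * x ∈ V := by
  have polarization : x * y + y * x = (x + y) ^ 2 - x ^ 2 - y ^ 2 := by noncomm_ring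
  rw [polarization]
  exact sub_mem (sub_mem (hsq _ (add_mem hx hy)) (hsq x hx)) (hsq y hy)

section Module

variable {R A : Type*} [Ring R] [Ring A] [Module R A] {V : Submodule R A} {x y : A}

lemma mul_mem_of_sq_mem_of_commutator_mem (h2 : IsUnit (2 : R)) (hsq : ∀ z ∈ V, z ^ 2 ∈ V)
    (hx : x ∈ V) (hy : y ∈ V) (hxy : x * y - y * x ∈ V) : x * y ∈ V := by
  have two_smul_mul : (2 : R) • (x * y) = (x * y + y * x) + (x * y - y * x) := by
    rw [two_smul]; abel
  rw [← V.smul_mem_iff_of_isUnit h2, two_smul_mul]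
  exact V.add_mem (mul_add_mul_swap_mem_of_sq_mem hsq hx hy) hxy

lemma commutator_mem_of_quadric_relation {δ : R} (hδ : IsUnit δ) (h_one : 1 ∈ V)
    (hx : x ^ 2 ∈ V) (hy : y ^ 2 ∈ V) (h : x ^ 2 + y ^ 2 - 1 + δ • (x * y - y * x) = 0) :
    x * y - y * x ∈ V := by
  rw [← V.smul_mem_iff_of_isUnit hδ, eq_neg_of_add_eq_zero_right h]
  exact V.neg_mem (V.sub_mem (V.add_mem hx hy) h_one)

end Module

lemma toSubmodule_adjoin_pair_le_span_of_commutator_mem {R A : Type*} [CommRing R] [Ring A]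
    [Algebra R A] {x y : A} (h2 : IsUnit (2 : R))
    (hsq : ∀ z ∈ span R {1, x, y}, z ^ 2 ∈ span R {1, x, y})
    (hxy : x * y - y * x ∈ span R {1, x, y}) :
    Subalgebra.toSubmodule (Algebra.adjoin R {x, y}) ≤ span R {1, x, y} := by
  have hx : x ∈ span R {1, x, y} := mem_span_of_mem (by simp)
  have hy : y ∈ span R {1, x, y} := mem_span_of_mem (by simp)
  have x_mul_y_mem : x * y ∈ span R {1, x, y} :=
    mul_mem_of_sq_mem_of_commutator_mem h2 hsq hx hy hxy
  apply toSubmodule_adjoin_le_span_insert_one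
  rintro _ (rfl | rfl) _ (rfl | rfl)
  · simpa only [sq] using hsq _ hx
  · exact x_mul_y_mem
  · exact (sub_mem_iff_right _ x_mul_y_mem).mp hxy
  · simpa only [sq] using hsq _ hy

lemma matrix_fin_two_sq_eq_trace_smul_sub_det_smul_one {k : Type*} [CommRing k]
    (Z : Matrix (Fin 2) (Fin 2) k) :
    Z ^ 2 = Z.trace • Z - Z.det • (1 : Matrix (Fin 2) (Fin 2) k) := by
  nontriviality k
  have cayley_hamilton := Z.aeval_self_charpoly
  simp only [Matrix.charpoly_fin_two, map_add, map_sub, map_mul, map_pow, Polynomial.aeval_X,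
    Polynomial.aeval_C, Algebra.algebraMap_eq_smul_one, smul_mul_assoc, one_mul] at cayley_hamilton
  rw [← sub_eq_zero, ← cayley_hamilton]
  abel

lemma matrix_fin_two_sq_mem_of_one_mem {k : Type*} [CommRing k]
    {V : Submodule k (Matrix (Fin 2) (Fin 2) k)} (h_one : 1 ∈ V) {Z : Matrix (Fin 2) (Fin 2) k}
    (hZ : Z ∈ V) : Z ^ 2 ∈ V := by
  rw [matrix_fin_two_sq_eq_trace_smul_sub_det_smul_one]
  exact V.sub_mem (V.smul_mem _ hZ) (V.smul_mem _ h_one)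

theorem no_two_dimensional_simple_module_of_smooth_quadric_general
    {k : Type*} [CommRing k] [Nontrivial k] (h2 : IsUnit (2 : k)) {δ : k} (hδ : IsUnit δ) :
    ¬ ∃ X Y : Matrix (Fin 2) (Fin 2) k,
        X ^ 2 + Y ^ 2 - 1 + δ • (X * Y - Y * X) = 0 ∧
        Algebra.adjoin k ({X, Y} : Set (Matrix (Fin 2) (Fin 2) k)) = ⊤ := by
  rintro ⟨X, Y, h_rel, h_gen⟩
  have h_one : 1 ∈ span k {1, X, Y} := mem_span_of_mem (by simp)
  have h_sq : ∀ Z ∈ span k {1, X, Y}, Z ^ 2 ∈ span k {1, X, Y} := fun _ ↦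
    matrix_fin_two_sq_mem_of_one_mem h_one
  have commutator_mem : X * Y - Y * X ∈ span k {1, X, Y} :=
    commutator_mem_of_quadric_relation hδ h_one (h_sq X (mem_span_of_mem (by simp)))
      (h_sq Y (mem_span_of_mem (by simp))) h_rel
  have adjoin_le := toSubmodule_adjoin_pair_le_span_of_commutator_mem h2 h_sq commutator_mem
  rw [h_gen, Algebra.top_toSubmodule, top_le_iff] at adjoin_le
  exact span_triple_ne_top_of_three_lt_finrank (by simp [Module.finrank_matrix]) 1 X Y adjoin_le

/-- the noncommutative quadric `x² + y² − 1 + δ[x,y]` with `δ ≠ 0` has no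
2-dimensional simple module: there is no pair of 2×2 matrices satisfying the relation and
generating the full matrix algebra. -/
theorem no_two_dimensional_simple_module_of_smooth_quadric
    (k : Type) [Field k] [CharZero k] (δ : k) (hδ : δ ≠ 0) :
    ¬ ∃ X Y : Matrix (Fin 2) (Fin 2) k,
        X ^ 2 + Y ^ 2 - 1 + δ • (X * Y - Y * X) = 0 ∧
        Algebra.adjoin k ({X, Y} : Set (Matrix (Fin 2) (Fin 2) k)) = ⊤ :=
  no_two_dimensional_simple_module_of_smooth_quadric_general two_ne_zero.isUnit hδ.isUnit
end

section
/- Let k be a field, m ≥ 1, S = k⟨x₁,…,x_m⟩ the free associative k-algebra, and a = (a₁,…,a_m) ∈ k^m, with ε_a : S → k the k-algebra homomorphism sending x_i ↦ a_i. For every f ∈ S with ε_a(f) = 0 there exists a unique m-tuple (f₁,…,f_m) of elements of S such that f = ∑_{i=1}^m f_i·(x_i − a_i). -/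
/-!
Let `ε` be evaluation at `a`. The left partial derivatives at `a` assemble into a linear map `D`
with `D xᵢ = eᵢ` and the twisted Leibniz rule `D (f g) = f • D g + ε g • D f`. By induction on `f`
the rule gives `f = ∑ Dᵢ f · (xᵢ - aᵢ) + ε f`, which is existence when `ε f = 0`. Since
`ε (xᵢ - aᵢ) = 0`, it also gives `D (g · (xᵢ - aᵢ)) = g • eᵢ`, so `D` recovers the coefficients of
any left combination of the `xᵢ - aᵢ`, which is uniqueness.
-/

section LeftDerivative

open FreeAlgebra

variable {R X : Type*}

section Semiring

variable [CommSemiring R] (a : X → R)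

/-- The representation of the free algebra by the block upper triangular matrices
`[[f, D f], [0, ε f]]`, where `ε` is evaluation at `a` and `D f` is the tuple of left partial
derivatives of `f` at `a`. It serves to construct `D`: a representation of the free algebra may be
prescribed on generators. -/
noncomputable def leftDerivativeRep :
    FreeAlgebra R X →ₐ[R] Module.End R ((X →₀ FreeAlgebra R X) × R) :=
  lift R fun i =>
    { toFun := fun p => (ι R i • p.1 + p.2 • Finsupp.single i 1, a i * p.2)
      map_add' := fun p q => by
        ext1
        · simp only [Prod.fst_add, Prod.snd_add, smul_add, add_smul]
          abel
        · exact mul_add _ _ _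
      map_smul' := fun r p => by
        ext1
        · simp [smul_add, mul_smul, smul_comm r]
        · exact mul_left_comm _ _ _ }

/-- The tuple of noncommutative left partial derivatives at `a`, as a finitely supported function
on the generators so that there may be infinitely many of them. -/
noncomputable def leftDerivative : FreeAlgebra R X →ₗ[R] X →₀ FreeAlgebra R X :=
  LinearMap.fst R _ _ ∘ₗ LinearMap.applyₗ (0, 1) ∘ₗ (leftDerivativeRep a).toLinearMap

theorem leftDerivative_eq_fst (f : FreeAlgebra R X) :
    leftDerivative a f = (leftDerivativeRep a f (0, 1)).1 :=
  rfl

theorem leftDerivativeRep_ι (i : X) (p : (X →₀ FreeAlgebra R X) × R) :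
    leftDerivativeRep a (ι R i) p =
      (ι R i • p.1 + p.2 • Finsupp.single i 1, a i * p.2) := by
  simp [leftDerivativeRep]

@[simp]
theorem leftDerivative_ι (i : X) : leftDerivative a (ι R i) = Finsupp.single i 1 := by
  simp [leftDerivative_eq_fst, leftDerivativeRep_ι]

@[simp]
theorem leftDerivative_algebraMap (r : R) : leftDerivative a (algebraMap R _ r) = 0 := by
  simp [leftDerivative_eq_fst]

theorem leftDerivativeRep_apply_inl (f : FreeAlgebra R X) (u : X →₀ FreeAlgebra R X) :
    leftDerivativeRep a f (u, 0) = (f • u, 0) := by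
  induction f using FreeAlgebra.induction generalizing u with
  | grade0 r => simp
  | grade1 i => simp [leftDerivativeRep_ι]
  | add f g hf hg => simp [hf, hg, add_smul]
  | mul f g hf hg => simp [hf, hg, mul_smul]

theorem leftDerivativeRep_apply_snd (f : FreeAlgebra R X) (p : (X →₀ FreeAlgebra R X) × R) :
    (leftDerivativeRep a f p).2 = lift R a f * p.2 := by
  induction f using FreeAlgebra.induction generalizing p with
  | grade0 r => simp
  | grade1 i => simp [leftDerivativeRep_ι]
  | add f g hf hg => simp [hf, hg, add_mul]
  | mul f g hf hg => simp [hf, hg, mul_assoc]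

theorem leftDerivative_mul (f g : FreeAlgebra R X) :
    leftDerivative a (f * g) = f • leftDerivative a g + lift R a g • leftDerivative a f := by
  have column_g : leftDerivativeRep a g (0, 1) =
      (leftDerivative a g, 0) + lift R a g • ((0, 1) : (X →₀ FreeAlgebra R X) × R) := by
    ext1
    · simp [leftDerivative_eq_fst]
    · simp [leftDerivativeRep_apply_snd]
  calc leftDerivative a (f * g)
      = (leftDerivativeRep a f (leftDerivativeRep a g (0, 1))).1 := by
        rw [leftDerivative_eq_fst, map_mul, Module.End.mul_apply]
    _ = f • leftDerivative a g + lift R a g • leftDerivative a f := by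
        rw [column_g, map_add, map_smul, leftDerivativeRep_apply_inl, Prod.fst_add, Prod.smul_fst,
          ← leftDerivative_eq_fst]

end Semiring

variable [CommRing R] (a : X → R)

/-- The generator `xᵢ` recentred at `a`, that is `xᵢ - aᵢ`. -/
noncomputable def centeredGenerator (i : X) : FreeAlgebra R X :=
  ι R i - algebraMap R (FreeAlgebra R X) (a i)

@[simp]
theorem lift_centeredGenerator (i : X) : lift R a (centeredGenerator a i) = 0 := by
  simp [centeredGenerator]

@[simp]
theorem leftDerivative_centeredGenerator (i : X) :
    leftDerivative a (centeredGenerator a i) = Finsupp.single i 1 := by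
  simp [centeredGenerator]

theorem linearCombination_leftDerivative (f : FreeAlgebra R X) :
    Finsupp.linearCombination (FreeAlgebra R X) (centeredGenerator a) (leftDerivative a f) =
      f - algebraMap R (FreeAlgebra R X) (lift R a f) := by
  induction f using FreeAlgebra.induction with
  | grade0 r => simp
  | grade1 i => simp [centeredGenerator]
  | add f g hf hg => simp only [map_add, hf, hg, add_sub_add_comm]
  | mul f g hf hg =>
    simp only [leftDerivative_mul, ← algebraMap_smul (FreeAlgebra R X) (lift R a g), map_add,
      map_smul, hf, hg, smul_eq_mul, map_mul, mul_sub, ← Algebra.commutes (lift R a g)]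
    abel

theorem leftDerivative_linearCombination (g : X →₀ FreeAlgebra R X) :
    leftDerivative a (Finsupp.linearCombination (FreeAlgebra R X) (centeredGenerator a) g) = g := by
  induction g using Finsupp.induction_linear with
  | zero => simp
  | add g h hg hh => simp only [map_add, hg, hh]
  | single i f => simp [leftDerivative_mul]

theorem unique_left_decomposition_general (f : FreeAlgebra R X) (hf : lift R a f = 0) :
    ∃! g : X →₀ FreeAlgebra R X,
      f = g.sum fun i c => c * (ι R i - algebraMap R (FreeAlgebra R X) (a i)) := by
  change ∃! g, f = Finsupp.linearCombination (FreeAlgebra R X) (centeredGenerator a) g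
  refine ⟨leftDerivative a f, ?_, ?_⟩
  · simp [linearCombination_leftDerivative, hf]
  · rintro g rfl
    exact (leftDerivative_linearCombination a g).symm

end LeftDerivative

/-- unique left decomposition in the free algebra. If `f` vanishes under the
evaluation homomorphism at `a ∈ kᵐ`, then `f = ∑ fᵢ · (xᵢ − aᵢ)` for a unique `m`-tuple
`(f₁, …, f_m)`. -/
theorem unique_left_decomposition
    (k : Type) [Field k] (m : ℕ) (hm : 1 ≤ m) (a : Fin m → k)
    (f : FreeAlgebra k (Fin m)) (hf : FreeAlgebra.lift k a f = 0) :
    ∃! g : Fin m → FreeAlgebra k (Fin m),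
      f = ∑ i : Fin m,
        g i * (FreeAlgebra.ι k i - algebraMap k (FreeAlgebra k (Fin m)) (a i)) :=
  (Finsupp.equivFunOnFinite.existsUnique_congr fun {g} => by simp [Finsupp.sum_fintype]).mp
    (unique_left_decomposition_general a f hf)
end

section
/- Let k be a field and f = g·h a product of two elements g, h of the free algebra k⟨x,y⟩, and set A = k⟨x,y⟩/(f). Then for every point p₁ ∈ k² with h₀(p₁) = 0 and every point p₂ ∈ k² with g₀(p₂) = 0, one has Ext¹_A(k(p₁), k(p₂)) ≠ 0. -/
open CategoryTheory Opposite

noncomputable section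

/-!
If `Ext¹(k(χ₁), k(χ₂)) = 0` for two characters of an algebra `A`, then every `A`-linear map
`ker χ₁ → k(χ₂)` extends to `A`. A linear form `δ` with `δ(ab) = χ₂(a) δ(b) + δ(a) χ₁(b)` is
`A`-linear on `ker χ₁`, so it extends, which forces it to be inner: `δ = c (χ₂ - χ₁)`.

On the other hand, for any values `uᵢ`, the matrices `[[p₂ᵢ, uᵢ], [0, p₁ᵢ]]` define a
representation of the free algebra. It maps `g` to a matrix with vanishing upper left entry and
`h` to one with vanishing lower right entry, and the product of two such upper triangular matrices
is zero. The representation thus descends to the quotient by `g * h`, where its upper right entry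
is a `δ` as above taking the values `uᵢ` on the generators. As soon as `u` is not a multiple of
`p₂ - p₁`, this `δ` is not inner.
-/

section Homological

open Limits

variable {C : Type*} [Category* C] [Abelian C]

lemma isPushout_of_isIso_τ₃ {S T : ShortComplex C} (τ : S ⟶ T) [IsIso τ.τ₃] [Epi S.g] [Mono T.f]
    (hS : S.Exact) (hT : T.Exact) : IsPushout S.f τ.τ₁ τ.τ₂ T.f := by
  have sq : CommSq S.f τ.τ₁ τ.τ₂ T.f := ⟨τ.comm₁₂.symm⟩
  have : Epi (τ.τ₂ ≫ T.g) := τ.comm₂₃ ▸ inferInstance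
  have : Epi T.g := epi_of_epi τ.τ₂ T.g
  have : Epi sq.shortComplex.g := by
    refine Preadditive.epi_of_cancel_zero (biprod.desc τ.τ₂ T.f) fun z hz ↦ ?_
    have hz₂ : τ.τ₂ ≫ z = 0 := by simpa using biprod.inl ≫= hz
    have hzf : T.f ≫ z = 0 := by simpa using biprod.inr ≫= hz
    rw [← hT.g_desc z hzf] at hz₂ ⊢
    rw [← Category.assoc] at hz₂
    rw [zero_of_epi_comp _ hz₂, comp_zero]
  have exact : sq.shortComplex.Exact := by
    rw [ShortComplex.exact_iff_exact_up_to_refinements]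
    intro A (x : A ⟶ S.X₂ ⊞ T.X₁) hx
    have hx' : (x ≫ biprod.fst) ≫ τ.τ₂ + (x ≫ biprod.snd) ≫ T.f = 0 := by
      simpa only [biprod.desc_eq, Preadditive.comp_add, Category.assoc] using
        (show x ≫ biprod.desc τ.τ₂ T.f = 0 from hx)
    have hxg : (x ≫ biprod.fst) ≫ S.g = 0 := by
      rw [← cancel_mono τ.τ₃, Category.assoc, ← τ.comm₂₃]
      simpa using hx' =≫ T.g
    obtain ⟨A', π, hπ, y, hy⟩ := hS.exact_up_to_refinements _ hxg
    have hyf : (π ≫ x ≫ biprod.snd) ≫ T.f = -(y ≫ τ.τ₁) ≫ T.f :=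
      calc (π ≫ x ≫ biprod.snd) ≫ T.f
        _ = -(π ≫ x ≫ biprod.fst) ≫ τ.τ₂ := by
          rw [eq_comm, neg_eq_iff_add_eq_zero]
          simpa using π ≫= hx'
        _ = -(y ≫ τ.τ₁) ≫ T.f := by rw [hy]; simp [τ.comm₁₂]
    refine ⟨A', π, hπ, y, ?_⟩
    change π ≫ x = y ≫ biprod.lift S.f (-τ.τ₁)
    ext
    · simpa using hy
    · rw [← cancel_mono T.f]
      simpa using hyf
  exact ⟨sq, ⟨sq.isColimitEquivIsColimitCokernelCofork.symm exact.gIsCokernel⟩⟩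

variable {R : Type*} [Ring R] [Linear R C] [EnoughProjectives C]

lemma exists_d_comp_eq_of_subsingleton_ext {X Y : C} (P : ProjectiveResolution X) (n : ℕ)
    [Subsingleton (((Ext R C (n + 1)).obj (op X)).obj Y)] (φ : P.complex.X (n + 1) ⟶ Y)
    (hφ : P.complex.d (n + 2) (n + 1) ≫ φ = 0) :
    ∃ ψ : P.complex.X n ⟶ Y, P.complex.d (n + 1) n ≫ ψ = φ := by
  have hzero : IsZero ((P.complex.linearYonedaObj R Y).homology (n + 1)) :=
    (ModuleCat.isZero_of_subsingleton _).of_iso (P.isoExt (n + 1) Y).symm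
  rw [← HomologicalComplex.exactAt_iff_isZero_homology,
    HomologicalComplex.exactAt_iff' _ n (n + 1) (n + 2) (by simp) (by simp),
    ShortComplex.moduleCat_exact_iff] at hzero
  exact hzero φ hφ

variable (R) in
lemma exists_comp_eq_of_subsingleton_ext_one {S : ShortComplex C} (hS : S.ShortExact) {Y : C}
    [Subsingleton (((Ext R C 1).obj (op S.X₃)).obj Y)] (φ : S.X₁ ⟶ Y) :
    ∃ ψ : S.X₂ ⟶ Y, S.f ≫ ψ = φ := by
  have := hS.mono_f
  have := hS.epi_g
  let P := ProjectiveResolution.of S.X₃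
  let p : P.complex.X 0 ⟶ S.X₃ := P.π.f 0
  have : Epi p := inferInstanceAs (Epi (P.π.f 0))
  let T : ShortComplex C := .mk (P.complex.d 1 0) p P.complex_d_comp_π_f_zero
  have : Projective T.X₂ := P.projective 0
  let l : T.X₂ ⟶ S.X₂ := Projective.factorThru p S.g
  have hl : l ≫ S.g = T.g := Projective.factorThru_comp _ _
  let τ : T ⟶ S :=
    { τ₁ := hS.exact.lift (T.f ≫ l) (by rw [Category.assoc, hl, T.zero])
      τ₂ := l
      τ₃ := 𝟙 _
      comm₂₃ := hl.trans (Category.comp_id _).symm }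
  have pushout : IsPushout T.f τ.τ₁ τ.τ₂ S.f := isPushout_of_isIso_τ₃ τ P.exact₀ hS.exact
  obtain ⟨ψ, hψ⟩ : ∃ ψ, T.f ≫ ψ = τ.τ₁ ≫ φ :=
    exists_d_comp_eq_of_subsingleton_ext (R := R) P 0 (τ.τ₁ ≫ φ) (by
      have hτ : P.complex.d 2 1 ≫ τ.τ₁ = 0 := by
        rw [← cancel_mono S.f, Category.assoc, τ.comm₁₂]
        simp [T]
      rw [← Category.assoc, hτ, zero_comp])
  exact ⟨pushout.desc ψ φ hψ, pushout.inr_desc _ _ _⟩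

end Homological

section Modules

universe u v

variable (k : Type*) {A : Type u} [Field k] [Ring A] [Algebra k A] [Small.{v} A]
  {M N : ModuleCat.{v} A} {F : Type v} [AddCommGroup F] [Module A F]

lemma exists_extend_ker_of_subsingleton_ext_one
    (hExt : Subsingleton (((Ext k (ModuleCat A) 1).obj (op M)).obj N)) {q : F →ₗ[A] M}
    (hq : Function.Surjective q) (φ : LinearMap.ker q →ₗ[A] N) :
    ∃ ψ : F →ₗ[A] N, ψ ∘ₗ (LinearMap.ker q).subtype = φ := by
  obtain ⟨ψ, hψ⟩ := exists_comp_eq_of_subsingleton_ext_one k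
    (LinearMap.shortExact_shortComplexKer hq) (ModuleCat.ofHom φ)
  exact ⟨ψ.hom, congrArg ModuleCat.Hom.hom hψ⟩

end Modules

section Characters

/-- The base ring `k` as a module over a `k`-algebra `A` acting through the character `χ`. -/
def charMod {k A : Type*} [CommRing k] [Ring A] [Algebra k A] (χ : A →ₐ[k] k) : ModuleCat A :=
  (ModuleCat.restrictScalars χ.toRingHom).obj (ModuleCat.of k k)

lemma pointMod_eq_charMod (k : Type) [Field k] (f : FreeAlgebra k (Fin 2)) (p : Fin 2 → k)
    (h : MvPolynomial.eval p (abel k f) = 0) : pointMod k f p h = charMod (pointHom k f p h) :=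
  rfl

/-- A linear form satisfying the Leibniz rule with respect to two characters, `χ₂` acting on the
left and `χ₁` on the right: a 1-cocycle for extensions of `charMod χ₁` by `charMod χ₂`. -/
def IsSkewDerivation {k A : Type*} [CommSemiring k] [Semiring A] [Algebra k A]
    (χ₁ χ₂ : A →ₐ[k] k) (δ : A →ₗ[k] k) : Prop :=
  ∀ a b, δ (a * b) = χ₂ a * δ b + δ a * χ₁ b

theorem IsSkewDerivation.exists_eq_sub_mul_of_subsingleton_ext1 {k A : Type} [Field k] [Ring A]
    [Algebra k A] {χ₁ χ₂ : A →ₐ[k] k} {δ : A →ₗ[k] k} (hδ : IsSkewDerivation χ₁ χ₂ δ)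
    (hExt : Subsingleton (Ext1 k A (charMod χ₁) (charMod χ₂))) :
    ∃ c, ∀ a, δ a = (χ₂ a - χ₁ a) * c := by
  let q : A →ₗ[A] charMod χ₁ := LinearMap.toSpanSingleton A (charMod χ₁) (1 : k)
  have hq (a : A) : q a = χ₁ a := mul_one (χ₁ a)
  have hq_surj : Function.Surjective q := fun c : k ↦
    ⟨algebraMap k A c, (hq _).trans (χ₁.commutes c)⟩
  let φ : LinearMap.ker q →ₗ[A] charMod χ₂ :=
    { toFun := fun b ↦ δ b
      map_add' := fun b b' ↦ δ.map_add b b'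
      map_smul' := fun a b ↦ by
        have hb : χ₁ b = 0 := (hq b).symm.trans b.2
        change δ (a * b) = χ₂ a * δ b
        rw [hδ, hb, mul_zero, add_zero] }
  obtain ⟨ψ, hψ⟩ := exists_extend_ker_of_subsingleton_ext_one k hExt hq_surj φ
  let c : k := ψ 1
  have hψ_apply (b : A) : ψ b = χ₂ b * c :=
    (congrArg ψ (mul_one b).symm).trans (ψ.map_smul b 1)
  have hker (b : A) (hb : χ₁ b = 0) : δ b = χ₂ b * c :=
    (LinearMap.congr_fun hψ ⟨b, (hq b).trans hb⟩).symm.trans (hψ_apply b)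
  have hδ_one : δ 1 = 0 := by simpa using hδ 1 1
  refine ⟨c, fun a ↦ ?_⟩
  calc δ a = δ (a - algebraMap k A (χ₁ a)) := by
        simp [Algebra.algebraMap_eq_smul_one, hδ_one]
    _ = χ₂ (a - algebraMap k A (χ₁ a)) * c := hker _ (by simp)
    _ = (χ₂ a - χ₁ a) * c := by simp

end Characters

section Triangular

variable {k X : Type*} [CommSemiring k]

/-- The upper triangular representation of the free algebra with diagonal characters `p₂`, `p₁`,
sending the generator `i` to `!![p₂ i, u i; 0, p₁ i]`. It encodes an extension of the character
`p₁` by the character `p₂`. -/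
def triRep (p₁ p₂ u : X → k) : FreeAlgebra k X →ₐ[k] Matrix (Fin 2) (Fin 2) k :=
  FreeAlgebra.lift k fun i ↦ !![p₂ i, u i; 0, p₁ i]

variable (p₁ p₂ u : X → k)

lemma triRep_eq (a : FreeAlgebra k X) :
    triRep p₁ p₂ u a =
      !![FreeAlgebra.lift k p₂ a, triRep p₁ p₂ u a 0 1; 0, FreeAlgebra.lift k p₁ a] := by
  induction a using FreeAlgebra.induction with
  | grade0 c => ext i j; fin_cases i <;> fin_cases j <;> simp [Matrix.algebraMap_matrix_apply]
  | grade1 i => simp [triRep]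
  | mul a b ha hb =>
    rw [map_mul, ha, hb, Matrix.mul_fin_two]
    simp
  | add a b ha hb =>
    rw [map_add, ha, hb]
    ext i j; fin_cases i <;> fin_cases j <;> simp

lemma triRep_mul_apply_zero_one (a b : FreeAlgebra k X) :
    triRep p₁ p₂ u (a * b) 0 1 =
      FreeAlgebra.lift k p₂ a * triRep p₁ p₂ u b 0 1 +
        triRep p₁ p₂ u a 0 1 * FreeAlgebra.lift k p₁ b := by
  rw [map_mul, triRep_eq p₁ p₂ u a, triRep_eq p₁ p₂ u b, Matrix.mul_fin_two]
  simp

lemma triRep_eq_zero_of_mem_ker_mul_ker {a : FreeAlgebra k X}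
    (ha : a ∈ RingHom.ker (FreeAlgebra.lift k p₂) * RingHom.ker (FreeAlgebra.lift k p₁)) :
    triRep p₁ p₂ u a = 0 := by
  refine Submodule.mul_induction_on ha (fun g hg h hh ↦ ?_) fun a b ha hb ↦ ?_
  · rw [RingHom.mem_ker] at hg hh
    rw [map_mul, triRep_eq p₁ p₂ u g, triRep_eq p₁ p₂ u h, hg, hh, Matrix.mul_fin_two]
    ext i j; fin_cases i <;> fin_cases j <;> simp
  · rw [map_add, ha, hb, add_zero]

end Triangular

lemma exists_forall_ne_mul {k X : Type*} [MulZeroOneClass k] [NoZeroDivisors k]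
    [Nontrivial k] [Nontrivial X] (v : X → k) :
    ∃ u : X → k, ∀ c, u ≠ fun i ↦ v i * c := by
  classical
  obtain ⟨i, j, hij⟩ := exists_pair_ne X
  by_cases hi : v i = 0
  · refine ⟨Pi.single i 1, fun c hc ↦ ?_⟩
    simpa [hi] using congrFun hc i
  · refine ⟨Pi.single j 1, fun c hc ↦ ?_⟩
    have hc_zero : c = 0 := by simpa [hij, hi] using congrFun hc i
    simpa [hc_zero] using congrFun hc j

theorem exists_isSkewDerivation_ι_eq {k X : Type*} [CommRing k]
    {r : FreeAlgebra k X → FreeAlgebra k X → Prop} {χ₁ χ₂ : RingQuot r →ₐ[k] k} (u : X → k)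
    (hr : ∀ a b, r a b → a - b ∈ RingHom.ker (χ₂.comp (RingQuot.mkAlgHom k r)) *
      RingHom.ker (χ₁.comp (RingQuot.mkAlgHom k r))) :
    ∃ δ : RingQuot r →ₗ[k] k, IsSkewDerivation χ₁ χ₂ δ ∧
      ∀ i, δ (RingQuot.mkAlgHom k r (FreeAlgebra.ι k i)) = u i := by
  let p (χ : RingQuot r →ₐ[k] k) (i : X) : k := χ (RingQuot.mkAlgHom k r (FreeAlgebra.ι k i))
  have hχ (χ : RingQuot r →ₐ[k] k) :
      FreeAlgebra.lift k (p χ) = χ.comp (RingQuot.mkAlgHom k r) :=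
    FreeAlgebra.lift_comp_ι (χ.comp (RingQuot.mkAlgHom k r))
  let ρ : RingQuot r →ₐ[k] Matrix (Fin 2) (Fin 2) k :=
    RingQuot.liftAlgHom k ⟨triRep (p χ₁) (p χ₂) u, fun a b hab ↦ by
      rw [← sub_eq_zero, ← map_sub]
      apply triRep_eq_zero_of_mem_ker_mul_ker
      simpa only [hχ] using hr a b hab⟩
  have hρ (a : FreeAlgebra k X) :
      ρ (RingQuot.mkAlgHom k r a) = triRep (p χ₁) (p χ₂) u a :=
    RingQuot.liftAlgHom_mkAlgHom_apply ..
  refine ⟨Matrix.entryLinearMap k k 0 1 ∘ₗ ρ.toLinearMap, fun a b ↦ ?_, fun i ↦ ?_⟩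
  · obtain ⟨a, rfl⟩ := RingQuot.mkAlgHom_surjective k r a
    obtain ⟨b, rfl⟩ := RingQuot.mkAlgHom_surjective k r b
    simpa only [← map_mul, LinearMap.comp_apply, AlgHom.toLinearMap_apply, AlgHom.comp_apply,
      Matrix.entryLinearMap_apply, hρ, hχ] using triRep_mul_apply_zero_one (p χ₁) (p χ₂) u a b
  · simp [hρ, triRep]

theorem ext_nonvanishing_of_factorisation_general {k X : Type} [Field k] [Nontrivial X]
    {r : FreeAlgebra k X → FreeAlgebra k X → Prop} {χ₁ χ₂ : RingQuot r →ₐ[k] k}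
    (hr : ∀ a b, r a b → a - b ∈ RingHom.ker (χ₂.comp (RingQuot.mkAlgHom k r)) *
      RingHom.ker (χ₁.comp (RingQuot.mkAlgHom k r))) :
    Nontrivial (Ext1 k (RingQuot r) (charMod χ₁) (charMod χ₂)) := by
  by_contra hExt
  rw [not_nontrivial_iff_subsingleton] at hExt
  let x (i : X) : RingQuot r := RingQuot.mkAlgHom k r (FreeAlgebra.ι k i)
  obtain ⟨u, hu⟩ := exists_forall_ne_mul fun i ↦ χ₂ (x i) - χ₁ (x i)
  obtain ⟨δ, hδ, hδu⟩ := exists_isSkewDerivation_ι_eq u hr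
  obtain ⟨c, hc⟩ := hδ.exists_eq_sub_mul_of_subsingleton_ext1 hExt
  exact hu c (funext fun i ↦ (hδu i).symm.trans (hc (x i)))

lemma mem_ker_pointHom_comp {k : Type} [Field k] {f a : FreeAlgebra k (Fin 2)} {p : Fin 2 → k}
    {hp : MvPolynomial.eval p (abel k f) = 0} (ha : MvPolynomial.eval p (abel k a) = 0) :
    a ∈ RingHom.ker ((pointHom k f p hp).comp (RingQuot.mkAlgHom k _)) := by
  have hcomp : pointHom k f p hp (RingQuot.mkAlgHom k _ a) = evalAt k p a :=
    RingQuot.liftAlgHom_mkAlgHom_apply ..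
  rw [RingHom.mem_ker, AlgHom.comp_apply, hcomp, ← eval_abel, ha]

/-- for a factorisation `f = g·h` in the free algebra `k⟨x,y⟩`, every point
`p₁` of the curve `h₀ = 0` and every point `p₂` of the curve `g₀ = 0` satisfy
`Ext¹_A(k(p₁), k(p₂)) ≠ 0`, where `A = k⟨x,y⟩/(f)`. -/
theorem ext_nonvanishing_of_factorisation
    (k : Type) [Field k] (g h : FreeAlgebra k (Fin 2)) (p₁ p₂ : Fin 2 → k)
    (hp₁ : MvPolynomial.eval p₁ (abel k h) = 0)
    (hp₂ : MvPolynomial.eval p₂ (abel k g) = 0) :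
    Nontrivial (Ext1 k (quotAlg k (g * h))
      (pointMod k (g * h) p₁ (by rw [map_mul (abel k), map_mul, hp₁, mul_zero]))
      (pointMod k (g * h) p₂ (by rw [map_mul (abel k), map_mul, hp₂, zero_mul]))) := by
  rw [pointMod_eq_charMod, pointMod_eq_charMod]
  refine ext_nonvanishing_of_factorisation_general ?_
  rintro _ _ ⟨rfl, rfl⟩
  rw [sub_zero]
  exact Ideal.mul_mem_mul (mem_ker_pointHom_comp hp₂) (mem_ker_pointHom_comp hp₁)

end
end

section
/- Let k be a field, A an associative k-algebra, and let 0 → M → E → N → 0 be a non-split short exact sequence of left A-modules of finite length with Supp(M) ∩ Supp(N) = ∅. If End_A(M) = k·id_M and End_A(N) = k·id_N, then End_A(E) = k·id_E. -/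
/-- `V` is (isomorphic to) a subquotient of `M`; for modules of finite length and `V` simple,
this says exactly that `V` is a composition factor of `M` (Jordan–Hölder). -/
def IsSubquotient (A : Type) [Ring A] (V M : Type) [AddCommGroup V] [Module A V]
    [AddCommGroup M] [Module A M] : Prop :=
  ∃ (q : Submodule A M) (p : Submodule A ↥q), Nonempty ((↥q ⧸ p) ≃ₗ[A] V)

/-!
Since `Hom(M, N) = 0`, an endomorphism `φ` of `E` preserves `M`, so it acts on `M` by some scalar
`a` and on `N` by some scalar `b`. If `a ≠ b`, then `(a - b)⁻¹ (a - φ)` kills `M` and induces the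
identity on `N`, which splits the sequence. Hence `a = b`, and `φ - a` kills `M` and lands in `M`,
so it comes from a map `N → M`, which is zero.

Disjoint supports force `Hom(M, N) = 0 = Hom(N, M)`: the image of a nonzero map has a simple
subquotient, namely a simple quotient of a nonzero cyclic submodule, which both modules inherit.
-/

section Subquotient

variable {A : Type} [Ring A] {V X Y : Type} [AddCommGroup V] [Module A V]
  [AddCommGroup X] [Module A X] [AddCommGroup Y] [Module A Y]

theorem isSubquotient_iff_exists_surjective :
    IsSubquotient A V X ↔ ∃ (q : Submodule A X) (g : q →ₗ[A] V), Function.Surjective g where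
  mp := fun ⟨q, p, ⟨e⟩⟩ ↦
    ⟨q, e.toLinearMap ∘ₗ p.mkQ, e.surjective.comp p.mkQ_surjective⟩
  mpr := fun ⟨q, g, hg⟩ ↦ ⟨q, LinearMap.ker g, ⟨g.quotKerEquivOfSurjective hg⟩⟩

theorem IsSubquotient.of_injective {f : X →ₗ[A] Y} (hf : Function.Injective f)
    (h : IsSubquotient A V X) : IsSubquotient A V Y := by
  obtain ⟨q, g, hg⟩ := isSubquotient_iff_exists_surjective.mp h
  let e := Submodule.equivMapOfInjective f hf q
  exact isSubquotient_iff_exists_surjective.mpr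
    ⟨q.map f, g ∘ₗ e.symm.toLinearMap, hg.comp e.symm.surjective⟩

theorem IsSubquotient.of_surjective {f : X →ₗ[A] Y} (hf : Function.Surjective f)
    (h : IsSubquotient A V Y) : IsSubquotient A V X := by
  obtain ⟨q, g, hg⟩ := isSubquotient_iff_exists_surjective.mp h
  exact isSubquotient_iff_exists_surjective.mpr
    ⟨q.comap f, g ∘ₗ f.submoduleComap q,
      hg.comp (f.submoduleComap_surjective_of_surjective q hf)⟩

variable (A X) in
theorem exists_isSimpleModule_isSubquotient [Nontrivial X] :
    ∃ (V : Type) (_ : AddCommGroup V) (_ : Module A V),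
      IsSimpleModule A V ∧ IsSubquotient A V X := by
  obtain ⟨x, hx⟩ := exists_ne (0 : X)
  let C := Submodule.span A {x}
  have : Nontrivial C := Submodule.nontrivial_span_singleton hx
  obtain ⟨p, hp⟩ := IsCoatomic.exists_coatom (Submodule A C)
  exact ⟨C ⧸ p, inferInstance, inferInstance, isSimpleModule_iff_isCoatom.mpr hp,
    C, p, ⟨LinearEquiv.refl A _⟩⟩

theorem linearMap_eq_zero_of_disjoint_simple_subquotients
    (hdisj : ∀ (V : Type) [AddCommGroup V] [Module A V], IsSimpleModule A V →
      IsSubquotient A V X → IsSubquotient A V Y → False) (f : X →ₗ[A] Y) : f = 0 := by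
  by_contra hf
  have : Nontrivial (LinearMap.range f) :=
    Submodule.nontrivial_iff_ne_bot.mpr (mt LinearMap.range_eq_bot.mp hf)
  obtain ⟨V, _, _, hV, hVf⟩ := exists_isSimpleModule_isSubquotient A (LinearMap.range f)
  exact hdisj V hV (hVf.of_surjective f.surjective_rangeRestrict)
    (hVf.of_injective (LinearMap.range f).subtype_injective)

end Subquotient

section Exact

variable {A M E N M' E' N' X : Type*} [Ring A] [AddCommGroup M] [Module A M]
  [AddCommGroup E] [Module A E] [AddCommGroup N] [Module A N] [AddCommGroup M'] [Module A M']
  [AddCommGroup E'] [Module A E'] [AddCommGroup N'] [Module A N'] [AddCommGroup X] [Module A X]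
  {ι : M →ₗ[A] E} {π : E →ₗ[A] N} {ι' : M' →ₗ[A] E'} {π' : E' →ₗ[A] N'}

theorem exists_comp_eq_of_exact_of_injective (hexact : Function.Exact ι π)
    (hι : Function.Injective ι) (g : X →ₗ[A] E) (hg : π ∘ₗ g = 0) :
    ∃ t : X →ₗ[A] M, ι ∘ₗ t = g := by
  have hrange (x : X) : g x ∈ LinearMap.range ι := (hexact (g x)).mp (LinearMap.congr_fun hg x)
  refine ⟨(LinearEquiv.ofInjective ι hι).symm.toLinearMap ∘ₗ g.codRestrict _ hrange, ?_⟩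
  ext x
  simp

theorem exists_comp_eq_of_exact_of_surjective (hexact : Function.Exact ι π)
    (hπ : Function.Surjective π) (g : E →ₗ[A] X) (hg : g ∘ₗ ι = 0) :
    ∃ t : N →ₗ[A] X, t ∘ₗ π = g := by
  have hker : LinearMap.ker π ≤ LinearMap.ker g :=
    hexact.linearMap_ker_eq ▸ LinearMap.range_le_ker_iff.mpr hg
  refine ⟨(LinearMap.ker π).liftQ g hker ∘ₗ (π.quotKerEquivOfSurjective hπ).symm.toLinearMap, ?_⟩
  ext x
  simp [LinearMap.quotKerEquivOfSurjective_symm_apply]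

theorem eq_zero_of_comp_eq_zero_of_exact (hexact : Function.Exact ι π)
    (hπ : Function.Surjective π) (hexact' : Function.Exact ι' π') (hι' : Function.Injective ι')
    (hNM' : ∀ f : N →ₗ[A] M', f = 0) (ψ : E →ₗ[A] E') (hψι : ψ ∘ₗ ι = 0) (hπψ : π' ∘ₗ ψ = 0) :
    ψ = 0 := by
  obtain ⟨t, rfl⟩ := exists_comp_eq_of_exact_of_surjective hexact hπ ψ hψι
  have hπt : π' ∘ₗ t = 0 := (LinearMap.cancel_right hπ).mp hπψ
  obtain ⟨u, rfl⟩ := exists_comp_eq_of_exact_of_injective hexact' hι' t hπt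
  rw [hNM' u, LinearMap.comp_zero, LinearMap.zero_comp]

theorem exists_section_of_comp_eq_zero_of_comp_eq_self (hexact : Function.Exact ι π)
    (hπ : Function.Surjective π) (ψ : E →ₗ[A] E) (hψι : ψ ∘ₗ ι = 0) (hπψ : π ∘ₗ ψ = π) :
    ∃ s : N →ₗ[A] E, π ∘ₗ s = LinearMap.id := by
  obtain ⟨s, rfl⟩ := exists_comp_eq_of_exact_of_surjective hexact hπ ψ hψι
  exact ⟨s, (LinearMap.cancel_right hπ).mp hπψ⟩

theorem exists_section_of_scalars_ne {k : Type*} [Field k] [Algebra k A] [Module k E]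
    [IsScalarTower k A E] [Module k N] [IsScalarTower k A N] (hexact : Function.Exact ι π)
    (hπ : Function.Surjective π) {φ : E →ₗ[A] E} {a b : k} (hφι : φ ∘ₗ ι = a • ι)
    (hπφ : π ∘ₗ φ = b • π) (hab : a ≠ b) : ∃ s : N →ₗ[A] E, π ∘ₗ s = LinearMap.id := by
  refine exists_section_of_comp_eq_zero_of_comp_eq_self hexact hπ
    ((a - b)⁻¹ • (a • LinearMap.id - φ)) ?_ ?_
  · rw [LinearMap.smul_comp, LinearMap.sub_comp, LinearMap.smul_comp, LinearMap.id_comp, hφι,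
      sub_self, smul_zero]
  · rw [LinearMap.comp_smul, LinearMap.comp_sub, LinearMap.comp_smul, LinearMap.comp_id, hπφ,
      ← sub_smul, inv_smul_smul₀ (sub_ne_zero.mpr hab)]

theorem end_eq_scalars_of_nonsplit_extension_general {k : Type*} [Field k] [Algebra k A]
    (hexact : Function.Exact ι π) (hι : Function.Injective ι) (hπ : Function.Surjective π)
    (hnonsplit : ¬ ∃ s : N →ₗ[A] E, π ∘ₗ s = LinearMap.id)
    (hMN : ∀ f : M →ₗ[A] N, f = 0) (hNM : ∀ f : N →ₗ[A] M, f = 0)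
    (hEndM : ∀ φ : M →ₗ[A] M, ∃ c : k, ∀ x : M, φ x = algebraMap k A c • x)
    (hEndN : ∀ φ : N →ₗ[A] N, ∃ c : k, ∀ x : N, φ x = algebraMap k A c • x)
    (φ : E →ₗ[A] E) : ∃ c : k, ∀ x : E, φ x = algebraMap k A c • x := by
  let : Module k E := Module.compHom E (algebraMap k A)
  let : Module k N := Module.compHom N (algebraMap k A)
  have : IsScalarTower k A E := .of_algebraMap_smul fun _ _ ↦ rfl
  have : IsScalarTower k A N := .of_algebraMap_smul fun _ _ ↦ rfl
  obtain ⟨α, hα⟩ := exists_comp_eq_of_exact_of_injective hexact hι (φ ∘ₗ ι) (hMN _)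
  obtain ⟨β, hβ⟩ := exists_comp_eq_of_exact_of_surjective hexact hπ (π ∘ₗ φ) (hMN _)
  obtain ⟨a, ha⟩ := hEndM α
  obtain ⟨b, hb⟩ := hEndN β
  have hφι : φ ∘ₗ ι = a • ι := by
    ext m
    simp [← hα, ha]
  have hπφ : π ∘ₗ φ = b • π := by
    ext x
    simp [← hβ, hb]
  obtain rfl : a = b :=
    by_contra fun hab ↦ hnonsplit (exists_section_of_scalars_ne hexact hπ hφι hπφ hab)
  have hφ : φ - a • LinearMap.id = 0 :=
    eq_zero_of_comp_eq_zero_of_exact hexact hπ hexact hι hNM _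
      (by rw [LinearMap.sub_comp, LinearMap.smul_comp, LinearMap.id_comp, hφι, sub_self])
      (by rw [LinearMap.comp_sub, LinearMap.comp_smul, LinearMap.comp_id, hπφ, sub_self])
  exact ⟨a, LinearMap.congr_fun (sub_eq_zero.mp hφ)⟩

end Exact

/-- for a non-split extension `0 → M → E → N → 0` of finite-length modules
with disjoint supports, if all endomorphisms of `M` and of `N` are scalars, then all
endomorphisms of `E` are scalars. -/
theorem end_eq_scalars_of_nonsplit_extension (k : Type) [Field k]
    (A : Type) [Ring A] [Algebra k A]
    (M E N : Type) [AddCommGroup M] [Module A M] [AddCommGroup E] [Module A E]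
    [AddCommGroup N] [Module A N]
    (hM : IsFiniteLength A M) (hN : IsFiniteLength A N)
    (ι : M →ₗ[A] E) (π : E →ₗ[A] N)
    (hι : Function.Injective ι) (hπ : Function.Surjective π)
    (hexact : LinearMap.range ι = LinearMap.ker π)
    (hnonsplit : ¬ ∃ s : N →ₗ[A] E, π.comp s = LinearMap.id)
    (hdisj : ∀ (V : Type) [AddCommGroup V] [Module A V], IsSimpleModule A V →
      IsSubquotient A V M → IsSubquotient A V N → False)
    (hEndM : ∀ φ : M →ₗ[A] M, ∃ c : k, ∀ x : M, φ x = algebraMap k A c • x)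
    (hEndN : ∀ φ : N →ₗ[A] N, ∃ c : k, ∀ x : N, φ x = algebraMap k A c • x) :
    ∀ φ : E →ₗ[A] E, ∃ c : k, ∀ x : E, φ x = algebraMap k A c • x :=
  end_eq_scalars_of_nonsplit_extension_general (LinearMap.exact_iff.mpr hexact.symm) hι hπ hnonsplit
    (linearMap_eq_zero_of_disjoint_simple_subquotients hdisj)
    (linearMap_eq_zero_of_disjoint_simple_subquotients
      fun V _ _ hV hVN hVM ↦ hdisj V hV hVM hVN)
    hEndM hEndN
end

section
/- Let k be an algebraically closed field, A an associative k-algebra, and E a nonzero finite-dimensional left A-module whose composition factors are pairwise non-isomorphic. Then E is indecomposable if and only if End_A(E) = k·id_E. -/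
/-!
If an endomorphism `f` with `f ^ 2 = 0` were nonzero, then a simple subquotient of
`range f ≤ ker f` would, pulled back along `f`, occur a second time above `ker f`. Hence the
endomorphism ring of a multiplicity-free module is reduced. If moreover the module is indecomposable
and `c` is an eigenvalue of `φ`, then `φ - c` is nilpotent by Fitting's lemma, so it vanishes.

A composition series controls every simple subquotient `q / p`, not only its own factors: `q / p` is
isomorphic to the factor `b / a` with `q ⊓ a ≤ p` but not `q ⊓ b ≤ p`, and by modularity two simple
subquotients with `q₁ ≤ p₂` are isomorphic to different factors of the series in this way.
-/

open JordanHolderLattice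

section ModularLattice

variable {X : Type*} [Lattice X] {a b p q r : X}

theorem sup_inf_eq_of_covBy (hab : a ⋖ b) (hr : ¬r ⊓ b ≤ a) : a ⊔ r ⊓ b = b :=
  (hab.eq_or_eq le_sup_left (sup_le hab.le inf_le_right)).resolve_left fun h ↦
    hr (sup_eq_left.1 h)

variable [IsModularLattice X]

theorem iso_of_inf_le_of_not_inf_le (hab : a ⋖ b) (hpq : p ⋖ q) (ha : q ⊓ a ≤ p)
    (hb : ¬q ⊓ b ≤ p) : Iso (p, q) (a, b) := by
  have hqb : ¬q ⊓ b ≤ a := fun h ↦ hb ((le_inf inf_le_left h).trans ha)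
  have sup_p : p ⊔ q ⊓ b = q := by
    rw [inf_comm]
    exact sup_inf_eq_of_covBy hpq (by rwa [inf_comm])
  have sup_a : a ⊔ q ⊓ b = b := sup_inf_eq_of_covBy hab hqb
  have inf_a : a ⊓ (q ⊓ b) = q ⊓ a := by
    rw [inf_left_comm, inf_eq_left.2 hab.le]
  have inf_p : p ⊓ (q ⊓ b) = q ⊓ a := by
    have hcov : q ⊓ a ⋖ q ⊓ b := inf_a ▸ inf_covBy_of_covBy_sup_left (sup_a.symm ▸ hab)
    exact (hcov.eq_or_eq (le_inf ha (inf_le_inf_left q hab.le)) inf_le_right).resolve_right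
      fun h ↦ hb (inf_eq_right.1 h)
  exact iso_trans (second_iso_of_eq hpq sup_p inf_p) (iso_symm (second_iso_of_eq hab sup_a inf_a))

theorem inf_le_of_inf_le_of_covBy (hab : a ⋖ b) (hr : ¬r ⊓ b ≤ a) (hrp : r ≤ p) (hpq : p ≤ q)
    (ha : q ⊓ a ≤ p) : q ⊓ b ≤ p :=
  calc
    q ⊓ b = q ⊓ (a ⊔ r ⊓ b) := by rw [sup_inf_eq_of_covBy hab hr]
    _ = q ⊓ a ⊔ r ⊓ b := (inf_sup_assoc_of_le a (inf_le_left.trans (hrp.trans hpq))).symm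
    _ ≤ p := sup_le ha (inf_le_left.trans hrp)

theorem exists_inf_le_and_not_inf_le [BoundedOrder X] (s : CompositionSeries X)
    (hhead : s.head = ⊥) (hlast : s.last = ⊤) (hpq : p < q) :
    ∃ i : Fin s.length, q ⊓ s i.castSucc ≤ p ∧ ¬q ⊓ s i.succ ≤ p := by
  by_contra! h
  have hbot : q ⊓ s 0 ≤ p := by simp [show s 0 = ⊥ from hhead]
  have hle : ∀ i, q ⊓ s i ≤ p := Fin.induction hbot h
  have htop : q ⊓ s.last ≤ p := hle (Fin.last s.length)
  exact hpq.not_ge (by simpa only [hlast, inf_top_eq] using htop)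

end ModularLattice

section MultiplicityFree

variable {R M N : Type*} [Ring R] [AddCommGroup M] [Module R M] [AddCommGroup N] [Module R N]

variable (R M) in
/-- A module is multiplicity-free if its composition factors are pairwise non-isomorphic. The
condition is imposed on pairs of simple subquotients `q₁ / p₁` and `q₂ / p₂` with `q₁ ≤ p₂`, i.e. on
pairs that can occur together in one chain of submodules, so no composition series is needed to
state it. -/
def IsMultiplicityFree : Prop :=
  ∀ ⦃p₁ q₁ p₂ q₂ : Submodule R M⦄, p₁ ⋖ q₁ → q₁ ≤ p₂ → p₂ ⋖ q₂ →
    IsEmpty ((q₁ ⧸ p₁.comap q₁.subtype) ≃ₗ[R] q₂ ⧸ p₂.comap q₂.subtype)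

theorem IsMultiplicityFree.of_compositionSeries (s : CompositionSeries (Submodule R M))
    (hhead : s.head = ⊥) (hlast : s.last = ⊤)
    (hs : Pairwise fun i j : Fin s.length ↦
      IsEmpty ((s i.succ ⧸ (s i.castSucc).comap (s i.succ).subtype) ≃ₗ[R]
        s j.succ ⧸ (s j.castSucc).comap (s j.succ).subtype)) :
    IsMultiplicityFree R M := by
  intro p₁ q₁ p₂ q₂ h₁ h₁₂ h₂
  obtain ⟨i, hi, hi'⟩ := exists_inf_le_and_not_inf_le s hhead hlast h₁.lt
  obtain ⟨j, hj, hj'⟩ := exists_inf_le_and_not_inf_le s hhead hlast h₂.lt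
  have hij : i ≠ j := by
    rintro rfl
    have hq₁ : ¬q₁ ⊓ s i.succ ≤ s i.castSucc := fun h ↦ hi' ((le_inf inf_le_left h).trans hi)
    exact hj' (inf_le_of_inf_le_of_covBy (s.step i) hq₁ h₁₂ h₂.le hj)
  have e₁ := (iso_of_inf_le_of_not_inf_le (s.step i) h₁ hi hi').linearEquiv
  have e₂ := (iso_of_inf_le_of_not_inf_le (s.step j) h₂ hj hj').linearEquiv
  exact ⟨fun e ↦ (hs hij).false ((e₁.symm.trans e).trans e₂)⟩

/-- `f` identifies the subquotient `f⁻¹ q / f⁻¹ p` with `q / p` whenever `q ≤ range f`. -/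
noncomputable def comapSubquotientEquiv (f : M →ₗ[R] N) (p : Submodule R N) {q : Submodule R N}
    (hq : q ≤ LinearMap.range f) :
    (q.comap f ⧸ (p.comap f).comap (q.comap f).subtype) ≃ₗ[R] q ⧸ p.comap q.subtype :=
  let g : q.comap f →ₗ[R] q ⧸ p.comap q.subtype :=
    (p.comap q.subtype).mkQ ∘ₗ f.restrict (p := q.comap f) (q := q) fun _ hx ↦ hx
  have hker : (p.comap f).comap (q.comap f).subtype = LinearMap.ker g := by
    rw [LinearMap.ker_comp, Submodule.ker_mkQ]
    rfl
  have hg : Function.Surjective g := (Submodule.mkQ_surjective _).comp fun y ↦ by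
    obtain ⟨x, hx⟩ := hq y.2
    exact ⟨⟨x, by simp [hx]⟩, Subtype.ext hx⟩
  (Submodule.quotEquivOfEq _ _ hker).trans (g.quotKerEquivOfSurjective hg)

theorem comap_covBy_comap_of_le_range (f : M →ₗ[R] N) {p q : Submodule R N} (hpq : p ⋖ q)
    (hq : q ≤ LinearMap.range f) : p.comap f ⋖ q.comap f := by
  have := (covBy_iff_quot_is_simple hpq.le).1 hpq
  exact (covBy_iff_quot_is_simple (Submodule.comap_mono hpq.le)).2
    (IsSimpleModule.congr (comapSubquotientEquiv f p hq))

theorem exists_covBy_span_singleton {x : M} (hx : x ≠ 0) :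
    ∃ p : Submodule R M, p ⋖ Submodule.span R {x} := by
  have := CompleteLattice.Iic_coatomic_of_compact_element
    (Submodule.singleton_span_isCompactElement (R := R) x)
  rcases eq_top_or_exists_le_coatom (⊥ : Set.Iic (Submodule.span R {x})) with h | ⟨p, hp, -⟩
  · exact absurd (Submodule.span_singleton_eq_bot.1 (congr_arg Subtype.val h).symm) hx
  · exact ⟨p, Set.Iic.isCoatom_iff.1 hp⟩

theorem IsMultiplicityFree.isReduced_end (hM : IsMultiplicityFree R M) :
    IsReduced (Module.End R M) := by
  refine (isReduced_iff_pow_one_lt 2 one_lt_two).2 fun f hf ↦ ?_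
  by_contra hne
  obtain ⟨x, hx⟩ : ∃ x, f x ≠ 0 := DFunLike.ne_iff.1 hne
  obtain ⟨p, hp⟩ := exists_covBy_span_singleton (R := R) hx
  set q := Submodule.span R {f x}
  have hrange : q ≤ LinearMap.range f := by simp [q]
  have hker : q ≤ LinearMap.ker f := by
    have hfx : f (f x) = 0 := by rw [← Module.End.mul_apply, ← sq, hf, LinearMap.zero_apply]
    simpa [q] using hfx
  have hcov : p.comap f ⋖ q.comap f := comap_covBy_comap_of_le_range f hp hrange
  exact (hM hp (hker.trans (LinearMap.ker_le_comap f)) hcov).false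
    (comapSubquotientEquiv f p hrange).symm

end MultiplicityFree

section Indecomposable

variable {R M : Type*} [Ring R] [AddCommGroup M] [Module R M]

theorem injective_or_isNilpotent_of_indecomposable [IsArtinian R M] [IsNoetherian R M]
    (hM : ∀ p q : Submodule R M, IsCompl p q → p = ⊥ ∨ q = ⊥) (f : Module.End R M) :
    Function.Injective f ∨ IsNilpotent f := by
  obtain ⟨n, hn, hcompl⟩ := ((Filter.eventually_ne_atTop 0).and
    f.eventually_isCompl_ker_pow_range_pow).exists
  refine (hM _ _ hcompl).imp (fun hker ↦ ?_) fun hrange ↦ ⟨n, LinearMap.range_eq_bot.1 hrange⟩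
  obtain ⟨m, rfl⟩ := Nat.exists_eq_succ_of_ne_zero hn
  have hle : LinearMap.ker f ≤ LinearMap.ker (f ^ (m + 1)) :=
    pow_succ f m ▸ LinearMap.ker_le_ker_comp f (f ^ m)
  exact LinearMap.ker_eq_bot.1 (eq_bot_mono hle hker)

theorem indecomposable_of_forall_end_eq_smul {k : Type*} [Semiring k] [IsDomain k] [Module k M]
    [Module.IsTorsionFree k M] (hM : ∀ f : Module.End R M, ∃ c : k, ∀ x, f x = c • x)
    (p q : Submodule R M) (hpq : IsCompl p q) : p = ⊥ ∨ q = ⊥ := by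
  obtain ⟨c, hc⟩ := hM (p.projection q hpq)
  rcases eq_or_ne c 0 with rfl | hc0
  · left
    rw [← Submodule.range_projection hpq, LinearMap.range_eq_bot]
    exact LinearMap.ext fun x ↦ by simpa using hc x
  · right
    rw [← Submodule.ker_projection hpq, LinearMap.ker_eq_bot']
    intro x hx
    exact (smul_eq_zero.1 ((hc x).symm.trans hx)).resolve_left hc0

theorem exists_forall_end_eq_smul_of_isReduced (k : Type*) [Field k] [IsAlgClosed k] [Algebra k R]
    [Module k M] [IsScalarTower k R M] [FiniteDimensional k M] [Nontrivial M]
    [IsReduced (Module.End R M)] (hM : ∀ p q : Submodule R M, IsCompl p q → p = ⊥ ∨ q = ⊥)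
    (f : Module.End R M) : ∃ c : k, ∀ x, f x = c • x := by
  have : IsArtinian R M := isArtinian_of_tower k inferInstance
  have : IsNoetherian R M := isNoetherian_of_tower k inferInstance
  obtain ⟨c, hc⟩ := Module.End.exists_eigenvalue (f.restrictScalars k : Module.End k M)
  obtain ⟨v, hv⟩ := hc.exists_hasEigenvector
  have hnil : IsNilpotent (f - algebraMap k (Module.End R M) c) := by
    refine (injective_or_isNilpotent_of_indecomposable hM _).resolve_left fun hinj ↦ hv.2 (hinj ?_)
    simpa [sub_eq_zero] using hv.apply_eq_smul
  exact ⟨c, fun x ↦ LinearMap.congr_fun (sub_eq_zero.1 hnil.eq_zero) x⟩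

theorem indecomposable_iff_endomorphisms_are_scalars_general (k : Type*) [Field k] [IsAlgClosed k]
    [Algebra k R] [Module k M] [IsScalarTower k R M] [FiniteDimensional k M] [Nontrivial M]
    [IsReduced (Module.End R M)] :
    (∀ p q : Submodule R M, IsCompl p q → p = ⊥ ∨ q = ⊥) ↔
      ∀ f : M →ₗ[R] M, ∃ c : k, ∀ x, f x = c • x :=
  ⟨exists_forall_end_eq_smul_of_isReduced k, indecomposable_of_forall_end_eq_smul⟩

end Indecomposable

/-- a nonzero finite-dimensional module over a `k`-algebra (with `k`
algebraically closed) whose composition factors are pairwise non-isomorphic is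
indecomposable if and only if all of its endomorphisms are scalars. -/
theorem indecomposable_iff_endomorphisms_are_scalars
    (k : Type) [Field k] [IsAlgClosed k]
    (A : Type) [Ring A] [Algebra k A]
    (E : Type) [AddCommGroup E] [Module A E] [Module k E] [IsScalarTower k A E]
    [FiniteDimensional k E] [Nontrivial E]
    (r : ℕ) (V : Fin r → Type) [∀ i, AddCommGroup (V i)] [∀ i, Module A (V i)]
    (hsimple : ∀ i, IsSimpleModule A (V i))
    (hpairwise : ∀ i j, i ≠ j → IsEmpty (V i ≃ₗ[A] V j))
    (F : Fin (r + 1) → Submodule A E) (hmono : Monotone F)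
    (hbot : F 0 = ⊥) (htop : F (Fin.last r) = ⊤)
    (hfactor : ∀ i : Fin r, Nonempty
      ((↥(F i.succ) ⧸ Submodule.comap (F i.succ).subtype (F i.castSucc)) ≃ₗ[A] V i)) :
    ((∀ p q : Submodule A E, IsCompl p q → p = ⊥ ∨ q = ⊥) ↔
      (∀ φ : E →ₗ[A] E, ∃ c : k, ∀ x : E, φ x = c • x)) := by
  have hcov (i : Fin r) : F i.castSucc ⋖ F i.succ := by
    have := hsimple i
    exact (covBy_iff_quot_is_simple (hmono i.castSucc_le_succ)).2
      (IsSimpleModule.congr (hfactor i).some)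
  have : IsReduced (Module.End A E) :=
    (IsMultiplicityFree.of_compositionSeries ⟨r, F, hcov⟩ hbot htop fun i j hij ↦
      ⟨fun e ↦ (hpairwise i j hij).false
        (((hfactor i).some.symm.trans e).trans (hfactor j).some)⟩).isReduced_end
  exact indecomposable_iff_endomorphisms_are_scalars_general k
end
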